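/- arXiv:2407.10150 — 2 statements merged into one kernel-verified Lean document; each statement's English description precedes it below -/
import Mathlib

section
/- Let H be a complex Hilbert space and let φ : B(H) → B(H) be a (not necessarily linear, additive or continuous) map whose range contains all operators in B(H) of rank at most two. Suppose for any a, b ∈ B(H) there is a *-automorphism θ_{a,b} of B(H) with φ(a)*φ(b) = θ_{a,b}(a*b). Then there exist unitary operators U, V on H such that either φ(a) = UaV for all a ∈ B(H), or there is a conjugate-linear isometric involution J on H such that φ(a) = U(Ja*J)V for all a ∈ B(H). -/
set_option synthInstance.maxHeartbeats 1000000
set_option maxHeartbeats 1000000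

open Cardinal

/-- A `*`-automorphism of a complex `*`-algebra: a bijective complex-linear multiplicative
map preserving the star operation. -/
def IsStarAutomorphism {A : Type*} [Ring A] [Algebra ℂ A] [Star A] (θ : A → A) : Prop :=
  Function.Bijective θ ∧ IsLinearMap ℂ θ ∧ (∀ a b : A, θ (a * b) = θ a * θ b) ∧
    ∀ a : A, θ (star a) = star (θ a)

/-- A conjugate-linear isometric involution of a complex Hilbert space. -/
def IsConjLinearIsometricInvolution {H : Type*} [NormedAddCommGroup H]
    [InnerProductSpace ℂ H] (J : H → H) : Prop :=
  (∀ x y : H, J (x + y) = J x + J y) ∧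
    (∀ (c : ℂ) (x : H), J (c • x) = (starRingEnd ℂ) c • J x) ∧
    (∀ x : H, ‖J x‖ = ‖x‖) ∧ ∀ x : H, J (J x) = x

/-! An algebra isomorphism preserves rank-one operators and their traces. Write `x ⊗ y` for the
operator `z ↦ ⟪y, z⟫ • x`. Looking at `(φ a)* φ a`, one sees that `φ` sends rank-one operators
to rank-one operators, and if `φ (x ⊗ y) = r ⊗ s`, then comparing the traces of `(x ⊗ y)* a` and
`(r ⊗ s)* φ a` gives `⟪r, φ a s⟫ = ⟪x, a y⟫`. Moreover `φ a` and `φ b` have orthogonal ranges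
exactly when `a` and `b` do, so rank-one operators with a common range are sent to rank-one
operators with a common range. The pairing identity then forces `φ (x ⊗ y) = U x ⊗ V y` with `U`
and `V` unitary, and applied once more to an arbitrary `a` it reads `φ a = U a V*`. -/

open InnerProductSpace ContinuousLinearMap

section RankOne

variable {𝕜 E F : Type*} [RCLike 𝕜] [NormedAddCommGroup E] [InnerProductSpace 𝕜 E]
  [NormedAddCommGroup F] [InnerProductSpace 𝕜 F]

theorem rank_rankOne_le_one (x : E) (y : F) :
    LinearMap.rank (rankOne 𝕜 x y : F →ₗ[𝕜] E) ≤ 1 := by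
  rcases eq_or_ne x 0 with rfl | hx
  · simp
  rcases eq_or_ne y 0 with rfl | hy
  · simp
  exact (rank_rankOne hx hy).le

/-- Operators of rank at most one, in the outer product form `z ↦ ⟪y, z⟫ • x` in which they are
used here. -/
def IsRankLEOne (T : F →L[𝕜] E) : Prop :=
  ∃ x y, T = rankOne 𝕜 x y

theorem IsRankLEOne.exists_norm_eq_one {T : F →L[𝕜] E} (hT : IsRankLEOne T) (h0 : T ≠ 0) :
    ∃ x y, ‖x‖ = 1 ∧ T = rankOne 𝕜 x y := by
  obtain ⟨x, y, rfl⟩ := hT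
  have hx : x ≠ 0 := by
    rintro rfl
    simp at h0
  refine ⟨(‖x‖⁻¹ : 𝕜) • x, (‖x‖ : 𝕜) • y, norm_smul_inv_norm hx, ?_⟩
  simp [smul_smul, hx]

theorem exists_eq_rankOne_of_orthogonal_le_ker {T : F →L[𝕜] E} {y : F}
    (h : ∀ z, inner 𝕜 y z = 0 → T z = 0) : ∃ x, T = rankOne 𝕜 x y := by
  refine ⟨(inner 𝕜 y y)⁻¹ • T y, ContinuousLinearMap.ext fun z => ?_⟩
  rcases eq_or_ne y 0 with rfl | hy
  · simp [h z]
  have hyy : inner 𝕜 y y ≠ 0 := inner_self_ne_zero.2 hy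
  have hz : T (z - (inner 𝕜 y z * (inner 𝕜 y y)⁻¹) • y) = 0 :=
    h _ (by rw [inner_sub_right, inner_smul_right, inv_mul_cancel_right₀ hyy, sub_self])
  rw [map_sub, map_smul, sub_eq_zero] at hz
  rw [hz, rankOne_apply, smul_smul]

variable [CompleteSpace E] [CompleteSpace F]

theorem exists_eq_rankOne_of_orthogonal_le_ker_adjoint {T : F →L[𝕜] E} {x : E}
    (h : ∀ w, inner 𝕜 x w = 0 → adjoint T w = 0) : ∃ y, T = rankOne 𝕜 x y := by
  obtain ⟨y, hy⟩ := exists_eq_rankOne_of_orthogonal_le_ker h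
  exact ⟨y, by rw [← adjoint_adjoint T, hy, adjoint_rankOne]⟩

theorem star_rankOne_mul (x y : E) (a : E →L[𝕜] E) :
    star (rankOne 𝕜 x y) * a = rankOne 𝕜 y (adjoint a x) := by
  rw [star_eq_adjoint, adjoint_rankOne, ContinuousLinearMap.mul_def, rankOne_comp]

theorem star_mul_rankOne_eq_zero_iff {a : E →L[𝕜] E} {x y : E} (hy : y ≠ 0) :
    star a * rankOne 𝕜 x y = 0 ↔ adjoint a x = 0 := by
  rw [star_eq_adjoint, ContinuousLinearMap.mul_def, comp_rankOne, rankOne_eq_zero, or_iff_left hy]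

theorem star_rankOne_self_mul_eq_zero_iff {a : E →L[𝕜] E} {w : E} :
    star (rankOne 𝕜 w w) * a = 0 ↔ adjoint a w = 0 := by
  rw [star_rankOne_mul, rankOne_eq_zero, or_iff_right_of_imp]
  rintro rfl
  exact map_zero _

theorem isRankLEOne_star_mul_self_iff {T : E →L[𝕜] E} :
    IsRankLEOne (star T * T) ↔ IsRankLEOne T := by
  constructor
  · rintro ⟨x, y, h⟩
    obtain ⟨z, hz⟩ := exists_eq_rankOne_of_orthogonal_le_ker (T := T) (y := y) fun z hz => by
      have hker : z ∈ (adjoint T ∘L T).ker := by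
        rw [← star_eq_adjoint, ← ContinuousLinearMap.mul_def, h, LinearMap.mem_ker, coe_coe,
          rankOne_apply, hz, zero_smul]
      rwa [ker_adjoint_comp_self] at hker
    exact ⟨z, y, hz⟩
  · rintro ⟨x, y, rfl⟩
    exact ⟨y, _, star_rankOne_mul x y _⟩

theorem isRankLEOne_iff_forall_mul_mul {T : E →L[𝕜] E} :
    IsRankLEOne T ↔ ∀ S : E →L[𝕜] E, ∃ c : 𝕜, T * S * T = c • T := by
  constructor
  · rintro ⟨x, y, rfl⟩ S
    exact ⟨inner 𝕜 y (S x), by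
      rw [mul_assoc, ContinuousLinearMap.mul_def, ContinuousLinearMap.mul_def, comp_rankOne,
        rankOne_comp_rankOne]⟩
  · intro h
    by_cases hT : ∀ x, T x = 0
    · exact ⟨0, 0, ContinuousLinearMap.ext fun x => by simp [hT x]⟩
    push Not at hT
    obtain ⟨x, hx⟩ := hT
    obtain ⟨y, hy⟩ := exists_eq_rankOne_of_orthogonal_le_ker_adjoint (T := T) (x := T x)
      fun w hw => ext_inner_right 𝕜 fun z => by
        obtain ⟨c, hc⟩ := h (rankOne 𝕜 z (T x))
        have hTz : inner 𝕜 (T x) (T x) • T z = c • T x := by simpa using congr($hc x)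
        have hwz : inner 𝕜 (T x) (T x) * inner 𝕜 w (T z) = 0 := by
          rw [← inner_smul_right, hTz, inner_smul_right, inner_eq_zero_symm.1 hw, mul_zero]
        rw [adjoint_inner_left, inner_zero_left]
        exact (mul_eq_zero.1 hwz).resolve_left (inner_self_ne_zero.2 hx)
    exact ⟨T x, y, hy⟩

end RankOne

theorem exists_linearIsometry_of_inner_map {𝕜 E F : Type*} [RCLike 𝕜]
    [NormedAddCommGroup E] [InnerProductSpace 𝕜 E] [NormedAddCommGroup F] [InnerProductSpace 𝕜 F]
    {f : E → F} (hf : ∀ x y, inner 𝕜 (f x) (f y) = inner 𝕜 x y) :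
    ∃ W : E →ₗᵢ[𝕜] F, ⇑W = f := by
  let L : E →ₗ[𝕜] F :=
    { toFun := f
      map_add' := fun x y => by
        rw [← sub_eq_zero, ← inner_self_eq_zero (𝕜 := 𝕜)]
        simp only [inner_sub_left, inner_sub_right, inner_add_left, inner_add_right, hf]
        ring
      map_smul' := fun c x => by
        rw [← sub_eq_zero, ← inner_self_eq_zero (𝕜 := 𝕜)]
        simp only [inner_sub_left, inner_sub_right, inner_smul_left, inner_smul_right, hf,
          RingHom.id_apply]
        ring }
  exact ⟨L.isometryOfInner hf, rfl⟩

section OperationallyTwoLocal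

variable {𝕜 H K : Type*} [RCLike 𝕜] [NormedAddCommGroup H] [InnerProductSpace 𝕜 H]
  [NormedAddCommGroup K] [InnerProductSpace 𝕜 K]

-- `⟪y, x⟫` is the trace of `rankOne 𝕜 x y`, and is read off from the square of that operator.
theorem inner_eq_of_algEquiv_rankOne (θ : (H →L[𝕜] H) ≃ₐ[𝕜] (K →L[𝕜] K)) {x y : H} {r s : K}
    (h : θ (rankOne 𝕜 x y) = rankOne 𝕜 r s) : inner 𝕜 s r = inner 𝕜 y x := by
  by_cases h0 : rankOne 𝕜 x y = 0
  · have h0' : rankOne 𝕜 r s = 0 := by rw [← h, h0, map_zero]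
    rw [rankOne_eq_zero] at h0 h0'
    rcases h0 with rfl | rfl <;> rcases h0' with rfl | rfl <;> simp
  · have h0' : rankOne 𝕜 r s ≠ 0 := by rwa [← h, Ne, map_eq_zero_iff θ θ.injective]
    have hsq : inner 𝕜 s r • rankOne 𝕜 r s = inner 𝕜 y x • rankOne 𝕜 r s := by
      rw [← rankOne_comp_rankOne, ← ContinuousLinearMap.mul_def, ← h, ← map_mul,
        ContinuousLinearMap.mul_def, rankOne_comp_rankOne, map_smul]
    exact smul_left_injective 𝕜 h0' hsq

variable [CompleteSpace H] [CompleteSpace K]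

theorem IsRankLEOne.map_algEquiv {T : H →L[𝕜] H} (hT : IsRankLEOne T)
    (θ : (H →L[𝕜] H) ≃ₐ[𝕜] (K →L[𝕜] K)) : IsRankLEOne (θ T) := by
  rw [isRankLEOne_iff_forall_mul_mul] at hT ⊢
  intro S
  obtain ⟨c, hc⟩ := hT (θ.symm S)
  exact ⟨c, by rw [← map_smul, ← hc, map_mul, map_mul, θ.apply_symm_apply]⟩

theorem isRankLEOne_algEquiv_iff (θ : (H →L[𝕜] H) ≃ₐ[𝕜] (K →L[𝕜] K)) {T : H →L[𝕜] H} :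
    IsRankLEOne (θ T) ↔ IsRankLEOne T :=
  ⟨fun h => by simpa using h.map_algEquiv θ.symm, fun h => h.map_algEquiv θ⟩

/-- The operational 2-local condition: each product `φ(a)* φ(b)` is the image of `a* b` under an
algebra isomorphism that may depend on `a` and `b`. The isomorphism need not preserve adjoints. -/
def IsOperationallyTwoLocal (φ : (H →L[𝕜] H) → (K →L[𝕜] K)) : Prop :=
  ∀ a b, ∃ θ : (H →L[𝕜] H) ≃ₐ[𝕜] (K →L[𝕜] K), star (φ a) * φ b = θ (star a * b)

namespace IsOperationallyTwoLocal

variable {φ : (H →L[𝕜] H) → (K →L[𝕜] K)}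

theorem star_mul_eq_zero_iff (hφ : IsOperationallyTwoLocal φ) {a b : H →L[𝕜] H} :
    star (φ a) * φ b = 0 ↔ star a * b = 0 := by
  obtain ⟨θ, hθ⟩ := hφ a b
  rw [hθ, map_eq_zero_iff θ θ.injective]

theorem map_eq_zero_iff (hφ : IsOperationallyTwoLocal φ) {a : H →L[𝕜] H} : φ a = 0 ↔ a = 0 := by
  rw [← adjoint_comp_self_eq_zero_iff (A := φ a), ← adjoint_comp_self_eq_zero_iff (A := a)]
  exact hφ.star_mul_eq_zero_iff

theorem isRankLEOne_map_iff (hφ : IsOperationallyTwoLocal φ) {a : H →L[𝕜] H} :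
    IsRankLEOne (φ a) ↔ IsRankLEOne a := by
  obtain ⟨θ, hθ⟩ := hφ a a
  rw [← isRankLEOne_star_mul_self_iff, hθ, isRankLEOne_algEquiv_iff, isRankLEOne_star_mul_self_iff]

theorem inner_map (hφ : IsOperationallyTwoLocal φ) {x y : H} {r s : K}
    (h : φ (rankOne 𝕜 x y) = rankOne 𝕜 r s) (a : H →L[𝕜] H) :
    inner 𝕜 r (φ a s) = inner 𝕜 x (a y) := by
  obtain ⟨θ, hθ⟩ := hφ (rankOne 𝕜 x y) a
  rw [h, star_rankOne_mul, star_rankOne_mul] at hθ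
  simpa only [adjoint_inner_left] using inner_eq_of_algEquiv_rankOne θ hθ.symm

theorem exists_map_rankOne_eq_left (hφ : IsOperationallyTwoLocal φ)
    (hrange : ∀ r s, ∃ a, φ a = rankOne 𝕜 r s) {x : H} (hx : x ≠ 0) :
    ∃ r, ‖r‖ = 1 ∧ ∀ z, ∃ s, φ (rankOne 𝕜 x z) = rankOne 𝕜 r s := by
  have hne : φ (rankOne 𝕜 x x) ≠ 0 := by
    rw [Ne, hφ.map_eq_zero_iff]
    exact rankOne_ne_zero hx hx
  obtain ⟨r, s, hr, hrs⟩ := (hφ.isRankLEOne_map_iff.2 ⟨x, x, rfl⟩).exists_norm_eq_one hne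
  refine ⟨r, hr, fun z => ?_⟩
  rcases eq_or_ne z 0 with rfl | hz
  · exact ⟨0, by simp [hφ.map_eq_zero_iff]⟩
  refine exists_eq_rankOne_of_orthogonal_le_ker_adjoint fun w hw => ?_
  obtain ⟨a, ha⟩ := hrange w w
  have hxx : star (φ a) * φ (rankOne 𝕜 x x) = 0 := by
    rw [ha, star_rankOne_self_mul_eq_zero_iff, hrs, adjoint_rankOne, rankOne_apply, hw, zero_smul]
  rw [← star_rankOne_self_mul_eq_zero_iff, ← ha, hφ.star_mul_eq_zero_iff,
    star_mul_rankOne_eq_zero_iff hz]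
  rwa [hφ.star_mul_eq_zero_iff, star_mul_rankOne_eq_zero_iff hx] at hxx

theorem exists_map_rankOne_eq (hφ : IsOperationallyTwoLocal φ)
    (hrange : ∀ r s, ∃ a, φ a = rankOne 𝕜 r s) {x y : H} {r s : K}
    (hs : s ≠ 0) (h : φ (rankOne 𝕜 x y) = rankOne 𝕜 r s) (t : K) :
    ∃ z, φ (rankOne 𝕜 x z) = rankOne 𝕜 r t := by
  rcases eq_or_ne t 0 with rfl | ht
  · exact ⟨0, by simp [hφ.map_eq_zero_iff]⟩
  obtain ⟨a, ha⟩ := hrange r t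
  suffices hx : ∃ z, a = rankOne 𝕜 x z by
    obtain ⟨z, rfl⟩ := hx
    exact ⟨z, ha⟩
  refine exists_eq_rankOne_of_orthogonal_le_ker_adjoint fun w hw => ?_
  have hxy : star (rankOne 𝕜 w w) * rankOne 𝕜 x y = 0 := by
    rw [star_rankOne_self_mul_eq_zero_iff, adjoint_rankOne, rankOne_apply, hw, zero_smul]
  rw [← star_rankOne_self_mul_eq_zero_iff, ← hφ.star_mul_eq_zero_iff, ha,
    star_mul_rankOne_eq_zero_iff ht]
  rwa [← hφ.star_mul_eq_zero_iff, h, star_mul_rankOne_eq_zero_iff hs] at hxy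

theorem exists_right_linearIsometryEquiv (hφ : IsOperationallyTwoLocal φ)
    (hrange : ∀ r s, ∃ a, φ a = rankOne 𝕜 r s) {e : H} (he : ‖e‖ = 1) :
    ∃ (f : K) (V : H ≃ₗᵢ[𝕜] K), ∀ y, φ (rankOne 𝕜 e y) = rankOne 𝕜 f (V y) := by
  have he0 : e ≠ 0 := norm_ne_zero_iff.1 (he ▸ one_ne_zero)
  obtain ⟨f, hf, hf'⟩ := hφ.exists_map_rankOne_eq_left hrange he0
  choose V hV using hf'
  have hVinner : ∀ y z, inner 𝕜 (V y) (V z) = inner 𝕜 y z := fun y z => by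
    simpa [hV, inner_smul_right, inner_self_eq_norm_sq_to_K, he, hf] using
      hφ.inner_map (hV z) (rankOne 𝕜 e y)
  obtain ⟨V, rfl⟩ := exists_linearIsometry_of_inner_map hVinner
  have hf0 : f ≠ 0 := norm_ne_zero_iff.1 (hf ▸ one_ne_zero)
  have hVe : V e ≠ 0 := (map_ne_zero_iff V V.injective).2 he0
  have hVsurj : Function.Surjective V := fun w => by
    obtain ⟨y, hy⟩ := hφ.exists_map_rankOne_eq hrange hVe (hV e) w
    rw [hV, ← sub_eq_zero, ← map_sub, rankOne_eq_zero, or_iff_right hf0, sub_eq_zero] at hy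
    exact ⟨y, hy⟩
  exact ⟨f, .ofSurjective V hVsurj, hV⟩

theorem exists_map_rankOne_eq_of_inner_ne_zero (hφ : IsOperationallyTwoLocal φ)
    (hrange : ∀ r s, ∃ a, φ a = rankOne 𝕜 r s) {e x : H} {f : K} {V : H ≃ₗᵢ[𝕜] K}
    (hV : ∀ y, φ (rankOne 𝕜 e y) = rankOne 𝕜 f (V y)) (hex : inner 𝕜 e x ≠ 0) :
    ∃ r, ∀ y, φ (rankOne 𝕜 x y) = rankOne 𝕜 r (V y) := by
  have hx : x ≠ 0 := by
    rintro rfl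
    simp at hex
  obtain ⟨g, -, hg⟩ := hφ.exists_map_rankOne_eq_left hrange hx
  choose W hW using hg
  have hWV : ∀ y z, inner 𝕜 f g * inner 𝕜 (W y) (V z) = inner 𝕜 e x * inner 𝕜 (V y) (V z) :=
    fun y z => by
      have h := hφ.inner_map (hV z) (rankOne 𝕜 x y)
      rwa [hW, inner_right_rankOne_apply, inner_right_rankOne_apply, ← V.inner_map_map y z] at h
  have hfg : inner 𝕜 f g ≠ 0 := fun h0 => by
    have h := hWV x x
    rw [h0, zero_mul, V.inner_map_map] at h
    exact mul_ne_zero hex (inner_self_ne_zero.2 hx) h.symm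
  refine ⟨(inner 𝕜 e x / inner 𝕜 f g) • g, fun y => ?_⟩
  have hWy : W y = starRingEnd 𝕜 (inner 𝕜 e x / inner 𝕜 f g) • V y :=
    ext_inner_right 𝕜 fun w => by
      obtain ⟨z, rfl⟩ := V.surjective w
      rw [inner_smul_left, starRingEnd_self_apply, div_mul_eq_mul_div, ← hWV,
        mul_div_cancel_left₀ _ hfg]
  rw [hW, hWy, map_smulₛₗ, starRingEnd_self_apply, map_smul, smul_apply]

theorem exists_map_rankOne_eq_right (hφ : IsOperationallyTwoLocal φ)
    (hrange : ∀ r s, ∃ a, φ a = rankOne 𝕜 r s) {e : H} {f : K} {V : H ≃ₗᵢ[𝕜] K} (he : e ≠ 0)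
    (hV : ∀ y, φ (rankOne 𝕜 e y) = rankOne 𝕜 f (V y)) (x : H) :
    ∃ r, ∀ y, φ (rankOne 𝕜 x y) = rankOne 𝕜 r (V y) := by
  by_cases hex : inner 𝕜 e x = 0
  · rcases eq_or_ne x 0 with rfl | hx
    · exact ⟨0, fun y => by simp [hφ.map_eq_zero_iff]⟩
    -- `e + x` is orthogonal to neither `e` nor `x`, so it links the two.
    obtain ⟨g, hg⟩ := hφ.exists_map_rankOne_eq_of_inner_ne_zero hrange hV (x := e + x)
      (by simpa [inner_add_right, hex] using he)
    exact hφ.exists_map_rankOne_eq_of_inner_ne_zero hrange hg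
      (by simpa [inner_add_left, hex] using hx)
  · exact hφ.exists_map_rankOne_eq_of_inner_ne_zero hrange hV hex

theorem exists_left_linearIsometryEquiv (hφ : IsOperationallyTwoLocal φ)
    (hrange : ∀ r s, ∃ a, φ a = rankOne 𝕜 r s) {e : H} {f : K} {V : H ≃ₗᵢ[𝕜] K} (he : ‖e‖ = 1)
    (hV : ∀ y, φ (rankOne 𝕜 e y) = rankOne 𝕜 f (V y)) :
    ∃ U : H ≃ₗᵢ[𝕜] K, ∀ x y, φ (rankOne 𝕜 x y) = rankOne 𝕜 (U x) (V y) := by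
  have he0 : e ≠ 0 := norm_ne_zero_iff.1 (he ▸ one_ne_zero)
  choose U hU using hφ.exists_map_rankOne_eq_right hrange he0 hV
  have hUinner : ∀ x u, inner 𝕜 (U x) (U u) = inner 𝕜 x u := fun x u => by
    simpa [hU, inner_smul_right, inner_self_eq_norm_sq_to_K, he] using
      hφ.inner_map (hU x e) (rankOne 𝕜 u e)
  obtain ⟨U, rfl⟩ := exists_linearIsometry_of_inner_map hUinner
  have hUsurj : Function.Surjective U := fun w => by
    obtain ⟨a, ha⟩ := hrange w (V e)
    obtain ⟨x, y, rfl⟩ := hφ.isRankLEOne_map_iff.1 ⟨w, V e, ha⟩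
    rw [hU] at ha
    exact ⟨inner 𝕜 y e • x, by
      simpa [inner_self_eq_norm_sq_to_K, he] using congr($ha (V e))⟩
  exact ⟨.ofSurjective U hUsurj, hU⟩

theorem map_apply (hφ : IsOperationallyTwoLocal φ) {U V : H ≃ₗᵢ[𝕜] K}
    (hUV : ∀ x y, φ (rankOne 𝕜 x y) = rankOne 𝕜 (U x) (V y)) (a : H →L[𝕜] H) (z : K) :
    φ a z = U (a (V.symm z)) := by
  refine ext_inner_left 𝕜 fun w => ?_
  obtain ⟨x, rfl⟩ := U.surjective w
  obtain ⟨y, rfl⟩ := V.surjective z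
  rw [hφ.inner_map (hUV x y), V.symm_apply_apply, U.inner_map_map]

theorem subsingleton [Subsingleton H] (hφ : IsOperationallyTwoLocal φ) : Subsingleton K := by
  obtain ⟨θ, -⟩ := hφ 0 0
  have h10 : (1 : K →L[𝕜] K) = 0 := by rw [← map_one θ, Subsingleton.elim 1 0, map_zero]
  exact subsingleton_of_forall_eq 0 fun x => by simpa using congr($h10 x)

end IsOperationallyTwoLocal

theorem stmt13_general (φ : (H →L[𝕜] H) → (K →L[𝕜] K))
    (hrange : ∀ r s, ∃ a, φ a = rankOne 𝕜 r s) (hφ : IsOperationallyTwoLocal φ) :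
    ∃ U V : H ≃ₗᵢ[𝕜] K, ∀ a z, φ a z = U (a (V.symm z)) := by
  rcases subsingleton_or_nontrivial H with hH | hH
  · have := hφ.subsingleton
    let O : H ≃ₗᵢ[𝕜] K := ⟨0, fun x => by simp [Subsingleton.eq_zero x]⟩
    exact ⟨O, O, fun a z => Subsingleton.elim _ _⟩
  obtain ⟨v, hv⟩ := exists_ne (0 : H)
  have he : ‖(‖v‖⁻¹ : 𝕜) • v‖ = 1 := norm_smul_inv_norm hv
  obtain ⟨f, V, hV⟩ := hφ.exists_right_linearIsometryEquiv hrange he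
  obtain ⟨U, hU⟩ := hφ.exists_left_linearIsometryEquiv hrange he hV
  exact ⟨U, V, hφ.map_apply hU⟩

end OperationallyTwoLocal

theorem IsStarAutomorphism.exists_algEquiv {A : Type*} [Ring A] [Algebra ℂ A] [Star A]
    {θ : A → A} (hθ : IsStarAutomorphism θ) : ∃ e : A ≃ₐ[ℂ] A, ⇑e = θ := by
  obtain ⟨hbij, hlin, hmul, -⟩ := hθ
  obtain ⟨u, hu⟩ := hbij.2 1
  have hone : θ 1 = 1 := by simpa [hu] using (hmul 1 u).symm
  exact ⟨.ofBijective (.ofLinearMap hlin.mk' hone hmul) hbij, rfl⟩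

theorem stmt13 {H : Type*} [NormedAddCommGroup H] [InnerProductSpace ℂ H]
    [CompleteSpace H]
    (φ : (H →L[ℂ] H) → (H →L[ℂ] H))
    -- the range of `φ` contains all operators of rank at most two
    (hrange : ∀ T : H →L[ℂ] H, LinearMap.rank (T : H →ₗ[ℂ] H) ≤ 2 → ∃ a, φ a = T)
    -- operational 2-local `*`-automorphism condition
    (hφ : ∀ a b : H →L[ℂ] H, ∃ θ : (H →L[ℂ] H) → (H →L[ℂ] H),
      IsStarAutomorphism θ ∧ star (φ a) * φ b = θ (star a * b)) :
    ∃ U V : H →L[ℂ] H, U ∈ unitary (H →L[ℂ] H) ∧ V ∈ unitary (H →L[ℂ] H) ∧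
      ((∀ a : H →L[ℂ] H, φ a = U * a * V) ∨
       (∃ J : H → H, IsConjLinearIsometricInvolution J ∧
         ∀ (a : H →L[ℂ] H) (x : H),
           φ a x = U (J (ContinuousLinearMap.adjoint a (J (V x)))))) := by
  have hφ' : IsOperationallyTwoLocal φ := fun a b => by
    obtain ⟨θ, hθ, h⟩ := hφ a b
    obtain ⟨θ, rfl⟩ := hθ.exists_algEquiv
    exact ⟨θ, h⟩
  have hrange' (r s : H) : ∃ a, φ a = rankOne ℂ r s :=
    hrange _ ((rank_rankOne_le_one r s).trans one_le_two)
  obtain ⟨U, V, h⟩ := stmt13_general φ hrange' hφ'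
  exact ⟨Unitary.linearIsometryEquiv.symm U, Unitary.linearIsometryEquiv.symm V.symm,
    SetLike.coe_mem _, SetLike.coe_mem _, .inl fun a => ContinuousLinearMap.ext (h a)⟩
end

section
/- Let A be a unital C*-algebra with a faithful tracial state τ, and let φ : A → A be a (not necessarily linear, additive or continuous) map such that for any a, b ∈ A there exists s ∈ A with φ(a)b + aφ(b) = s(ab) − (ab)s. Then φ is complex-linear, i.e., φ(t₁a₁ + t₂a₂) = t₁φ(a₁) + t₂φ(a₂) for all t₁, t₂ ∈ ℂ and a₁, a₂ ∈ A. -/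
set_option synthInstance.maxHeartbeats 1000000
set_option maxHeartbeats 1000000

open scoped ComplexOrder

/-!
Applying the trace to the hypothesis kills the commutator on the right, so `φ` is skew-adjoint for
the bilinear form `(a, b) ↦ τ (a * b)`. Faithfulness of `τ` makes this form separating, and a map
that has an adjoint with respect to a separating form is automatically linear: `B (f x) y` equals
`B x (g y)`, which is linear in `x`, and it determines `f x`.
-/

theorem isLinearMap_of_isAdjointPair {R M M₁ M₂ : Type*} [CommSemiring R]
    [AddCommMonoid M] [Module R M] [AddCommGroup M₁] [Module R M₁] [AddCommMonoid M₂] [Module R M₂]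
    {I : R →+* R} {B : M →ₗ[R] M →ₛₗ[I] M₂} {B' : M₁ →ₗ[R] M₁ →ₛₗ[I] M₂}
    {f : M → M₁} {g : M₁ → M} (hfg : LinearMap.IsAdjointPair B B' f g) (hB' : B'.SeparatingLeft) :
    IsLinearMap R f := by
  have injective_B' : Function.Injective B' :=
    (injective_iff_map_eq_zero B').2 (LinearMap.separatingLeft_iff_linear_nontrivial.1 hB')
  constructor
  · intro x y
    apply injective_B'
    ext z
    simp only [map_add, LinearMap.add_apply, hfg _ z]
  · intro c x
    apply injective_B'
    ext z
    simp only [map_smul, LinearMap.smul_apply, hfg _ z]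

section TraceForm

/-- The bilinear form `(a, b) ↦ τ (a * b)` attached to a linear functional `τ`, through which the
multiplicative hypothesis on `φ` becomes skew-adjointness. It is symmetric when `τ` is a trace. -/
def traceForm {R A M : Type*} [CommSemiring R] [NonUnitalNonAssocSemiring A] [Module R A]
    [IsScalarTower R A A] [SMulCommClass R A A] [AddCommMonoid M] [Module R M] (τ : A →ₗ[R] M) :
    A →ₗ[R] A →ₗ[R] M :=
  (LinearMap.mul R A).compr₂ τ

theorem traceForm_separatingLeft_of_faithful {R A M : Type*} [CommSemiring R]
    [NonUnitalNonAssocSemiring A] [Star A] [Module R A] [IsScalarTower R A A]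
    [SMulCommClass R A A] [AddCommMonoid M] [Module R M] {τ : A →ₗ[R] M}
    (hτtr : ∀ a b : A, τ (a * b) = τ (b * a))
    (hτfaithful : ∀ a : A, τ (star a * a) = 0 → a = 0) :
    (traceForm τ).SeparatingLeft :=
  fun a ha ↦ hτfaithful a ((hτtr (star a) a).trans (ha (star a)))

variable {R A M : Type*} [CommRing R] [NonUnitalNonAssocRing A] [Module R A]
  [IsScalarTower R A A] [SMulCommClass R A A] [AddCommGroup M] [Module R M] {τ : A →ₗ[R] M}
  {φ : A → A}

theorem isSkewAdjoint_traceForm_of_add_eq_commutator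
    (hτtr : ∀ a b : A, τ (a * b) = τ (b * a))
    (hφ : ∀ a b : A, ∃ s : A, φ a * b + a * φ b = s * (a * b) - (a * b) * s) :
    (traceForm τ).IsSkewAdjoint φ := by
  intro a b
  obtain ⟨s, hs⟩ := hφ a b
  have trace_eq_zero : τ (φ a * b) + τ (a * φ b) = 0 := by
    rw [← map_add, hs, map_sub, hτtr s, sub_self]
  calc
    τ (φ a * b) = -τ (a * φ b) := eq_neg_of_add_eq_zero_left trace_eq_zero
    _ = τ (a * -φ b) := by rw [mul_neg, map_neg]

theorem stmt17_general (hτtr : ∀ a b : A, τ (a * b) = τ (b * a))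
    (hτsep : (traceForm τ).SeparatingLeft)
    (hφ : ∀ a b : A, ∃ s : A, φ a * b + a * φ b = s * (a * b) - (a * b) * s) :
    IsLinearMap R φ :=
  isLinearMap_of_isAdjointPair (isSkewAdjoint_traceForm_of_add_eq_commutator hτtr hφ) hτsep

end TraceForm

theorem stmt17 {A : Type*} [NormedRing A] [StarRing A] [CStarRing A]
    [NormedAlgebra ℂ A] [CompleteSpace A] [StarModule ℂ A]
    -- `τ` is a faithful tracial state on `A`
    (τ : A →ₗ[ℂ] ℂ) (hτ1 : τ 1 = 1) (hτpos : ∀ a : A, 0 ≤ τ (star a * a))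
    (hτtr : ∀ a b : A, τ (a * b) = τ (b * a))
    (hτfaithful : ∀ a : A, τ (star a * a) = 0 → a = 0)
    (φ : A → A)
    -- operational 2-local inner derivation condition
    (hφ : ∀ a b : A, ∃ s : A, φ a * b + a * φ b = s * (a * b) - (a * b) * s) :
    ∀ (t₁ t₂ : ℂ) (a₁ a₂ : A), φ (t₁ • a₁ + t₂ • a₂) = t₁ • φ a₁ + t₂ • φ a₂ := by
  have hlin := stmt17_general hτtr (traceForm_separatingLeft_of_faithful hτtr hτfaithful) hφ
  exact fun t₁ t₂ a₁ a₂ ↦ by rw [hlin.map_add, hlin.map_smul, hlin.map_smul]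
end
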